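/- Let S = ⟨S, δ, L⟩ and S' = ⟨S', δ', L'⟩ be FLTSs witnessed w.r.t. f∃ΔPDL and Z a crisp simulation between them. Then for all x, y ∈ S, x' ∈ S', every formula φ of f∃ΔPDL and every program α of f∃ΔPDL: (a) if Z(x,x') holds then φ^S(x) ≤ φ^S'(x'); (b) if Z(x,x') holds and α^S(x,y) > 0, then there exists y' ∈ S' such that α^S(x,y) ≤ α^S'(x',y') and Z(y,y') holds. -/

import Mathlib

open unitInterval

noncomputable section
attribute [local instance] Classical.propDecidable

instance : Fact ((0:ℝ) ≤ 1) := ⟨zero_le_one⟩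

/-- A left-continuous t-norm on the unit interval `[0,1]`: a commutative, associative
binary operation with neutral element `1`, increasing in both arguments, that
distributes over suprema of nonempty sets (left-continuity). -/
structure Tnorm where
  mul : I → I → I
  mul_comm : ∀ x y, mul x y = mul y x
  mul_assoc : ∀ x y z, mul (mul x y) z = mul x (mul y z)
  mul_one : ∀ x, mul x 1 = x
  mul_le_mul : ∀ {a b c d : I}, a ≤ b → c ≤ d → mul a c ≤ mul b d
  left_continuous : ∀ (x : I) (s : Set I), s.Nonempty → mul x (sSup s) = sSup (mul x '' s)

/-- The residuum of a t-norm: `(x ⇒ y) = sup {z | z ⊗ x ≤ y}`. -/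
def Tnorm.res (T : Tnorm) (x y : I) : I := sSup {z : I | T.mul z x ≤ y}

/-- A fuzzy labeled transition system over actions `A`, propositions `P`, states `St`. -/
structure FLTS (A P St : Type) where
  delta : St → A → St → I
  label : St → P → I

/-- A crisp simulation between two FLTSs. -/
def IsSimulation {A P S S' : Type} (M : FLTS A P S) (M' : FLTS A P S')
    (Z : S → S' → Prop) : Prop :=
  (∀ x x', Z x x' → ∀ p, M.label x p ≤ M'.label x' p) ∧
  (∀ x y x' (ρ : A), Z x x' → 0 < M.delta x ρ y →
    ∃ y', M.delta x ρ y ≤ M'.delta x' ρ y' ∧ Z y y')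
mutual
/-- Formulas of f∃ΔPDL. -/
inductive EForm (A P : Type) : Type
  | const : I → EForm A P
  | prop : P → EForm A P
  | baaz : EForm A P → EForm A P
  | and : EForm A P → EForm A P → EForm A P
  | or : EForm A P → EForm A P → EForm A P
  | impl : I → EForm A P → EForm A P
  | dia : EProg A P → EForm A P → EForm A P
/-- Programs of f∃ΔPDL. -/
inductive EProg (A P : Type) : Type
  | act : A → EProg A P
  | comp : EProg A P → EProg A P → EProg A P
  | union : EProg A P → EProg A P → EProg A P
  | star : EProg A P → EProg A P
  | test : EForm A P → EProg A P
end

/-- The ⊗-product of the values of `r` along the path `x :: l`. -/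
def chainProd (T : Tnorm) {St : Type} (r : St → St → I) : St → List St → I
  | _, [] => 1
  | x, y :: l => T.mul (r x y) (chainProd T r y l)

mutual
/-- Semantics of f∃ΔPDL formulas. -/
def eformSem (T : Tnorm) {A P St : Type} (M : FLTS A P St) : EForm A P → St → I
  | .const a, _ => a
  | .prop p, x => M.label x p
  | .baaz φ, x => if eformSem T M φ x = 1 then 1 else 0
  | .and φ ψ, x => min (eformSem T M φ x) (eformSem T M ψ x)
  | .or φ ψ, x => max (eformSem T M φ x) (eformSem T M ψ x)
  | .impl a φ, x => T.res a (eformSem T M φ x)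
  | .dia α φ, x => ⨆ y, T.mul (eprogSem T M α x y) (eformSem T M φ y)
/-- Semantics of f∃ΔPDL programs. -/
def eprogSem (T : Tnorm) {A P St : Type} (M : FLTS A P St) : EProg A P → St → St → I
  | .act ρ, x, y => M.delta x ρ y
  | .comp α β, x, y => ⨆ z, T.mul (eprogSem T M α x z) (eprogSem T M β z y)
  | .union α β, x, y => max (eprogSem T M α x y) (eprogSem T M β x y)
  | .star α, x, y =>
      sSup {v : I | ∃ l : List St, l.getLastD x = y ∧ v = chainProd T (eprogSem T M α) x l}
  | .test φ, x, y => if x = y then eformSem T M φ x else 0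
end

/-- An FLTS is witnessed w.r.t. f∃ΔPDL: every supremum occurring in the semantic
clauses (for `⟨α⟩φ`, `α∘β` and `α*`) is attained by a greatest element. -/
def WitnessedE (T : Tnorm) {A P St : Type} (M : FLTS A P St) : Prop :=
  (∀ (α : EProg A P) (φ : EForm A P) (x : St), ∃ y : St, ∀ z : St,
      T.mul (eprogSem T M α x z) (eformSem T M φ z) ≤
        T.mul (eprogSem T M α x y) (eformSem T M φ y)) ∧
  (∀ (α β : EProg A P) (x y : St), ∃ z : St, ∀ w : St,
      T.mul (eprogSem T M α x w) (eprogSem T M β w y) ≤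
        T.mul (eprogSem T M α x z) (eprogSem T M β z y)) ∧
  (∀ (α : EProg A P) (x y : St), ∃ l : List St, l.getLastD x = y ∧
      ∀ l' : List St, l'.getLastD x = y →
        chainProd T (eprogSem T M α) x l' ≤ chainProd T (eprogSem T M α) x l)

/-!
A program denotes a fuzzy relation and a formula a fuzzy set, so it suffices that the forth
condition on relations and the monotonicity condition on sets are stable under the corresponding
operations. For `∘` and `*` the supremum is attained in the source system, at an intermediate state
or along a path. As `a ⊗ b ≤ a` and `a ⊗ b ≤ b`, all degrees along this witness are positive, so
each of its transitions can be matched in turn, and in the target system the matching path is one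
of the candidates for the supremum.
-/

/-- The Baaz projection operator `Δ` on truth degrees. -/
def baaz (a : I) : I := if a = 1 then 1 else 0

theorem baaz_monotone : Monotone baaz := by
  intro a b hab
  by_cases ha : a = 1
  · have hb : b = 1 := le_antisymm le_top (ha ▸ hab)
    rw [ha, hb]
  · rw [baaz, if_neg ha]
    exact bot_le

namespace Tnorm

variable (T : Tnorm)

theorem mul_le_left (a b : I) : T.mul a b ≤ a :=
  (T.mul_le_mul le_rfl le_top).trans_eq (T.mul_one a)

theorem mul_le_right (a b : I) : T.mul a b ≤ b :=
  (T.mul_comm a b).trans_le (T.mul_le_left b a)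

theorem res_monotone_right (a : I) : Monotone (T.res a) :=
  fun _ _ hbc => sSup_le_sSup fun _ hz => le_trans hz hbc

/-- The fuzzy set `⟨r⟩f`: the image of `f` under the converse of the fuzzy relation `r`. -/
def dia {S : Type*} (r : S → S → I) (f : S → I) (x : S) : I :=
  ⨆ y, T.mul (r x y) (f y)

/-- The sup-`⊗` composition of fuzzy relations. -/
def comp {S : Type*} (r s : S → S → I) (x y : S) : I :=
  ⨆ z, T.mul (r x z) (s z y)

/-- The reflexive-transitive closure of a fuzzy relation. A path from `x` to `y` is encoded by
the list of the states that follow `x`. -/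
def star {S : Type} (r : S → S → I) (x y : S) : I :=
  sSup {v : I | ∃ l : List S, l.getLastD x = y ∧ v = chainProd T r x l}

end Tnorm

/-- The fuzzy relation denoted by the test of a fuzzy set: the diagonal weighted by `f`. -/
def testRel {S : Type*} (f : S → I) (x y : S) : I := if x = y then f x else 0

/-- Degrees of membership do not decrease along `Z`; this is what (a) asserts of a formula. -/
def Preserves {S S' : Type*} (Z : S → S' → Prop) (f : S → I) (f' : S' → I) : Prop :=
  ∀ ⦃x x'⦄, Z x x' → f x ≤ f' x'

/-- The forth condition of simulations for fuzzy relations; this is what (b) asserts of a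
program. -/
def ForthCondition {S S' : Type*} (Z : S → S' → Prop)
    (r : S → S → I) (r' : S' → S' → I) : Prop :=
  ∀ ⦃x y x'⦄, Z x x' → 0 < r x y → ∃ y', r x y ≤ r' x' y' ∧ Z y y'

/-- Every supremum defining the composition or the iteration of programs is attained. -/
def ProgWitnessed (T : Tnorm) {A P S : Type} (M : FLTS A P S) : Prop :=
  (∀ (α β : EProg A P) (x y : S), ∃ z : S, ∀ w : S,
      T.mul (eprogSem T M α x w) (eprogSem T M β w y) ≤
        T.mul (eprogSem T M α x z) (eprogSem T M β z y)) ∧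
  (∀ (α : EProg A P) (x y : S), ∃ l : List S, l.getLastD x = y ∧
      ∀ l' : List S, l'.getLastD x = y →
        chainProd T (eprogSem T M α) x l' ≤ chainProd T (eprogSem T M α) x l)

theorem WitnessedE.progWitnessed {T : Tnorm} {A P S : Type} {M : FLTS A P S}
    (hM : WitnessedE T M) : ProgWitnessed T M :=
  hM.2

namespace ForthCondition

section

variable {S S' : Type*} {Z : S → S' → Prop} {r s : S → S → I} {r' s' : S' → S' → I}
  {f : S → I} {f' : S' → I}

theorem sup (hr : ForthCondition Z r r') (hs : ForthCondition Z s s') :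
    ForthCondition Z (r ⊔ s) (r' ⊔ s') := by
  intro x y x' hx hpos
  rcases le_total (r x y) (s x y) with hle | hle
  · have hmax : (r ⊔ s) x y = s x y := max_eq_right hle
    rw [hmax] at hpos ⊢
    obtain ⟨y', hy', hZy⟩ := hs hx hpos
    exact ⟨y', le_max_of_le_right hy', hZy⟩
  · have hmax : (r ⊔ s) x y = r x y := max_eq_left hle
    rw [hmax] at hpos ⊢
    obtain ⟨y', hy', hZy⟩ := hr hx hpos
    exact ⟨y', le_max_of_le_left hy', hZy⟩

theorem test (hf : Preserves Z f f') : ForthCondition Z (testRel f) (testRel f') := by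
  intro x y x' hx hpos
  obtain rfl : x = y := by
    by_contra hxy
    exact hpos.ne' (if_neg hxy)
  refine ⟨x', ?_, hx⟩
  simpa only [testRel, if_true] using hf hx

theorem comp (T : Tnorm) (hr : ForthCondition Z r r') (hs : ForthCondition Z s s')
    (hatt : ∀ x y, ∃ z, ∀ w, T.mul (r x w) (s w y) ≤ T.mul (r x z) (s z y)) :
    ForthCondition Z (T.comp r s) (T.comp r' s') := by
  intro x y x' hx hpos
  obtain ⟨z, hz⟩ := hatt x y
  have hle : T.comp r s x y ≤ T.mul (r x z) (s z y) := iSup_le hz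
  have hpos_z := hpos.trans_le hle
  obtain ⟨z', hrz, hZz⟩ := hr hx (hpos_z.trans_le (T.mul_le_left _ _))
  obtain ⟨y', hsy, hZy⟩ := hs hZz (hpos_z.trans_le (T.mul_le_right _ _))
  refine ⟨y', ?_, hZy⟩
  calc T.comp r s x y
      ≤ T.mul (r x z) (s z y) := hle
    _ ≤ T.mul (r' x' z') (s' z' y') := T.mul_le_mul hrz hsy
    _ ≤ T.comp r' s' x' y' := le_iSup (fun w => T.mul (r' x' w) (s' w y')) z'

theorem preserves_dia (T : Tnorm) (hr : ForthCondition Z r r') (hf : Preserves Z f f') :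
    Preserves Z (T.dia r f) (T.dia r' f') := by
  intro x x' hx
  refine iSup_le fun y => ?_
  rcases eq_zero_or_pos (r x y) with hzero | hpos
  · calc T.mul (r x y) (f y) ≤ r x y := T.mul_le_left _ _
      _ = 0 := hzero
      _ ≤ T.dia r' f' x' := bot_le
  · obtain ⟨y', hy', hZy⟩ := hr hx hpos
    calc T.mul (r x y) (f y)
        ≤ T.mul (r' x' y') (f' y') := T.mul_le_mul hy' (hf hZy)
      _ ≤ T.dia r' f' x' := le_iSup (fun w => T.mul (r' x' w) (f' w)) y'

end

section

variable {S S' : Type} {Z : S → S' → Prop} {r : S → S → I} {r' : S' → S' → I}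

theorem exists_chainProd_le (T : Tnorm) (hr : ForthCondition Z r r') (l : List S)
    {x : S} {x' : S'} (hx : Z x x') (hpos : 0 < chainProd T r x l) :
    ∃ l' : List S', chainProd T r x l ≤ chainProd T r' x' l' ∧
      Z (l.getLastD x) (l'.getLastD x') := by
  induction l generalizing x x' with
  | nil => exact ⟨[], le_rfl, hx⟩
  | cons y l ih =>
    obtain ⟨y', hy', hZy⟩ := hr hx (hpos.trans_le (T.mul_le_left _ _))
    obtain ⟨l', hl', hZl⟩ := ih hZy (hpos.trans_le (T.mul_le_right _ _))
    refine ⟨y' :: l', T.mul_le_mul hy' hl', ?_⟩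
    simpa only [List.getLastD_cons] using hZl

theorem star (T : Tnorm) (hr : ForthCondition Z r r')
    (hatt : ∀ x y, ∃ l : List S, l.getLastD x = y ∧
      ∀ l' : List S, l'.getLastD x = y → chainProd T r x l' ≤ chainProd T r x l) :
    ForthCondition Z (T.star r) (T.star r') := by
  intro x y x' hx hpos
  obtain ⟨l, rfl, hmax⟩ := hatt x y
  have hle : T.star r x (l.getLastD x) ≤ chainProd T r x l := by
    refine sSup_le ?_
    rintro _ ⟨l', hl', rfl⟩
    exact hmax l' hl'
  obtain ⟨l', hl', hZl⟩ := hr.exists_chainProd_le T l hx (hpos.trans_le hle)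
  refine ⟨l'.getLastD x', ?_, hZl⟩
  calc T.star r x (l.getLastD x)
      ≤ chainProd T r x l := hle
    _ ≤ chainProd T r' x' l' := hl'
    _ ≤ T.star r' x' (l'.getLastD x') := le_sSup ⟨l', rfl, rfl⟩

end

end ForthCondition

mutual

theorem preserves_eformSem {A P S S' : Type} {T : Tnorm} {M : FLTS A P S} {M' : FLTS A P S'}
    (hM : ProgWitnessed T M) {Z : S → S' → Prop} (hZ : IsSimulation M M' Z) :
    ∀ φ : EForm A P, Preserves Z (eformSem T M φ) (eformSem T M' φ)
  | .const _ => fun _ _ _ => le_rfl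
  | .prop p => fun x x' hx => hZ.1 x x' hx p
  | .baaz φ => fun _ _ hx => baaz_monotone (preserves_eformSem hM hZ φ hx)
  | .and φ ψ => fun _ _ hx =>
      min_le_min (preserves_eformSem hM hZ φ hx) (preserves_eformSem hM hZ ψ hx)
  | .or φ ψ => fun _ _ hx =>
      max_le_max (preserves_eformSem hM hZ φ hx) (preserves_eformSem hM hZ ψ hx)
  | .impl a φ => fun _ _ hx => T.res_monotone_right a (preserves_eformSem hM hZ φ hx)
  | .dia α φ => (forthCondition_eprogSem hM hZ α).preserves_dia T (preserves_eformSem hM hZ φ)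

theorem forthCondition_eprogSem {A P S S' : Type} {T : Tnorm} {M : FLTS A P S}
    {M' : FLTS A P S'} (hM : ProgWitnessed T M) {Z : S → S' → Prop}
    (hZ : IsSimulation M M' Z) :
    ∀ α : EProg A P, ForthCondition Z (eprogSem T M α) (eprogSem T M' α)
  | .act ρ => fun x y x' => hZ.2 x y x' ρ
  | .comp α β =>
      (forthCondition_eprogSem hM hZ α).comp T (forthCondition_eprogSem hM hZ β) (hM.1 α β)
  | .union α β => (forthCondition_eprogSem hM hZ α).sup (forthCondition_eprogSem hM hZ β)
  | .star α => (forthCondition_eprogSem hM hZ α).star T (hM.2 α)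
  | .test φ => .test (preserves_eformSem hM hZ φ)

end

theorem preservation_lemma_simulation_fePDL_general
    {A P S S' : Type} (T : Tnorm) (M : FLTS A P S) (M' : FLTS A P S')
    (hM : ProgWitnessed T M) (Z : S → S' → Prop) (hZ : IsSimulation M M' Z) :
    (∀ (φ : EForm A P) (x : S) (x' : S'),
      Z x x' → eformSem T M φ x ≤ eformSem T M' φ x') ∧
    (∀ (α : EProg A P) (x y : S) (x' : S'),
      Z x x' → 0 < eprogSem T M α x y →
        ∃ y' : S', eprogSem T M α x y ≤ eprogSem T M' α x' y' ∧ Z y y') :=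
  ⟨fun φ _ _ hx => preserves_eformSem hM hZ φ hx,
    fun α _ _ _ hx hpos => forthCondition_eprogSem hM hZ α hx hpos⟩

/-- Lemma on preservation under crisp simulations between FLTSs witnessed w.r.t.
f∃ΔPDL: (a) formulas are preserved, and (b) positive program transitions can be
matched with at least as large degrees. -/
theorem preservation_lemma_simulation_fePDL
    {A P S S' : Type} [Nonempty A] [Nonempty P] [Nonempty S] [Nonempty S']
    (T : Tnorm) (M : FLTS A P S) (M' : FLTS A P S')
    (hM : WitnessedE T M) (hM' : WitnessedE T M')
    (Z : S → S' → Prop) (hZ : IsSimulation M M' Z) :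
    (∀ (φ : EForm A P) (x : S) (x' : S'),
      Z x x' → eformSem T M φ x ≤ eformSem T M' φ x') ∧
    (∀ (α : EProg A P) (x y : S) (x' : S'),
      Z x x' → 0 < eprogSem T M α x y →
        ∃ y' : S', eprogSem T M α x y ≤ eprogSem T M' α x' y' ∧ Z y y') :=
  preservation_lemma_simulation_fePDL_general T M M' hM.progWitnessed Z hZ
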